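/- There exists N such that for every n ≥ N, every simple graph on n vertices containing no cycle of length 6 has fewer than n^{4/3} edges. -/

import Mathlib

/-- A simple graph contains no cycle of length 6. -/
def C6Free {V : Type*} (G : SimpleGraph V) : Prop :=
  ∀ (v : V) (w : G.Walk v v), w.IsCycle → w.length ≠ 6

open Finset Classical in
theorem c6_aux {V : Type*} {G : SimpleGraph V} (h : C6Free G) {a b c d e f : V}
    (h1 : G.Adj a b) (h2 : G.Adj b c) (h3 : G.Adj c d) (h4 : G.Adj d e) (h5 : G.Adj e f)
    (h6 : G.Adj f a) (hn : [a, b, c, d, e, f].Nodup) : False := by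
  let w : G.Walk a a := .cons h1 (.cons h2 (.cons h3 (.cons h4 (.cons h5 (.cons h6 .nil)))))
  refine h a w ?_ rfl
  simp only [List.nodup_cons, List.mem_cons, List.not_mem_nil, or_false, not_or] at hn
  rw [SimpleGraph.Walk.cons_isCycle_iff]
  constructor
  · simp [SimpleGraph.Walk.isPath_def]
    grind
  · simp
    grind

open Classical in
/-- codegree -/
noncomputable def cod {V : Type*} [Fintype V] (G : SimpleGraph V) (x y : V) : Finset V :=
  Finset.univ.filter (fun z => G.Adj x z ∧ G.Adj z y)

theorem mem_cod {V : Type*} [Fintype V] {G : SimpleGraph V} {x y z : V} :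
    z ∈ cod G x y ↔ G.Adj x z ∧ G.Adj z y := by simp [cod]

theorem exists_avoid {V : Type*} (s : Finset V) (hs : 4 ≤ s.card) (u v w : V) :
    ∃ z ∈ s, z ≠ u ∧ z ≠ v ∧ z ≠ w := by
  classical
  obtain ⟨z, hz, hz'⟩ := Finset.exists_mem_notMem_of_card_lt_card
    (s := {u, v, w}) (t := s) (lt_of_le_of_lt Finset.card_le_three (by omega))
  refine ⟨z, hz, ?_⟩
  simpa using hz'

theorem bad_unique {V : Type*} [Fintype V] {G : SimpleGraph V} (h : C6Free G) {a b x x' : V}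
    (hab : G.Adj a b) (hx : G.Adj x a) (hx' : G.Adj x' a) (hxb : x ≠ b) (hxb' : x' ≠ b)
    (hc : 4 ≤ (cod G x b).card) (hc' : 4 ≤ (cod G x' b).card) : x = x' := by
  by_contra hne
  obtain ⟨p, hp, hpa, hpx, -⟩ := exists_avoid _ hc a x' x'
  obtain ⟨q, hq, hqa, hqx, hqp⟩ := exists_avoid _ hc' a x p
  rw [mem_cod] at hp hq
  refine c6_aux h hp.2.symm hp.1.symm hx hx'.symm hq.1 hq.2 ?_
  have := hp.1.ne
  have := hp.2.ne
  have := hq.1.ne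
  have := hq.2.ne
  have := hab.ne
  have := hx.ne
  have := hx'.ne
  simp only [List.nodup_cons, List.mem_cons, List.not_mem_nil, or_false, not_or]
  grind

/-- good path x a b y -/
def GoodP {V : Type*} [Fintype V] (G : SimpleGraph V) (p q : V × V) : Prop :=
  G.Adj p.1 p.2 ∧ G.Adj q.1 p.1 ∧ G.Adj p.2 q.2 ∧ q.1 ≠ p.2 ∧ q.2 ≠ p.1 ∧ q.1 ≠ q.2 ∧
    (cod G q.1 p.2).card ≤ 3 ∧ (cod G p.1 q.2).card ≤ 3

theorem cod_comm {V : Type*} [Fintype V] (G : SimpleGraph V) (x y : V) :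
    cod G x y = cod G y x := by
  ext z
  simp only [mem_cod, G.adj_comm x z, G.adj_comm z y]
  tauto

open Classical in
theorem good_lower {V : Type*} [Fintype V] {G : SimpleGraph V} (h : C6Free G) {a b : V}
    (hab : G.Adj a b) : G.degree a * G.degree b ≤
      (Finset.univ.filter (fun q => GoodP G (a, b) q)).card + 3 * G.degree a + 3 * G.degree b := by
  set g := Finset.univ.filter (fun q => GoodP G (a, b) q)
  have key : ∀ a b : V, G.Adj a b → ((G.neighborFinset a).filter
      (fun x => x = b ∨ 4 ≤ (cod G x b).card)).card ≤ 2 := by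
    intro a b hab
    have h1 : ((G.neighborFinset a).filter (fun x => x ≠ b ∧ 4 ≤ (cod G x b).card)).card ≤ 1 := by
      rw [Finset.card_le_one]
      intro x hx x' hx'
      simp only [Finset.mem_filter, SimpleGraph.mem_neighborFinset] at hx hx'
      exact bad_unique h hab hx.1.symm hx'.1.symm hx.2.1 hx'.2.1 hx.2.2 hx'.2.2
    have h2 : (G.neighborFinset a).filter (fun x => x = b ∨ 4 ≤ (cod G x b).card) ⊆
        insert b ((G.neighborFinset a).filter (fun x => x ≠ b ∧ 4 ≤ (cod G x b).card)) := by
      intro x hx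
      simp only [Finset.mem_filter, Finset.mem_insert] at hx ⊢
      tauto
    have := Finset.card_le_card h2
    have := Finset.card_insert_le b
      ((G.neighborFinset a).filter (fun x => x ≠ b ∧ 4 ≤ (cod G x b).card))
    omega
  set A := (G.neighborFinset a).filter (fun x => x = b ∨ 4 ≤ (cod G x b).card) with hA
  set B := (G.neighborFinset b).filter (fun x => x = a ∨ 4 ≤ (cod G x a).card) with hB
  have hsub : G.neighborFinset a ×ˢ G.neighborFinset b ⊆
      g ∪ (A ×ˢ G.neighborFinset b ∪ (G.neighborFinset a ×ˢ B ∪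
        (G.neighborFinset a).image (fun x => (x, x)))) := by
    rintro ⟨x, y⟩ hxy
    simp only [Finset.mem_product, SimpleGraph.mem_neighborFinset] at hxy
    have hg : (x, y) ∈ g ↔ GoodP G (a, b) (x, y) := by simp [g]
    rw [Finset.mem_union, hg]
    simp only [hA, hB, Finset.mem_union, Finset.mem_filter,
      Finset.mem_product, SimpleGraph.mem_neighborFinset, Finset.mem_image, GoodP, Prod.mk.injEq]
    have := hxy.1.symm
    rw [cod_comm G y a]
    by_cases hxx : x = y
    · subst hxx
      have : ∃ z, G.Adj a z ∧ z = x ∧ z = x := ⟨x, hxy.1, rfl, rfl⟩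
      tauto
    · have : 4 ≤ (cod G x b).card ∨ (cod G x b).card ≤ 3 := by omega
      have : 4 ≤ (cod G a y).card ∨ (cod G a y).card ≤ 3 := by omega
      tauto
  have c1 := Finset.card_le_card hsub
  have c2 := Finset.card_union_le g (A ×ˢ G.neighborFinset b ∪ (G.neighborFinset a ×ˢ B ∪
        (G.neighborFinset a).image (fun x => (x, x))))
  have c3 := Finset.card_union_le (A ×ˢ G.neighborFinset b) (G.neighborFinset a ×ˢ B ∪
        (G.neighborFinset a).image (fun x => (x, x)))
  have c4 := Finset.card_union_le (G.neighborFinset a ×ˢ B)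
        ((G.neighborFinset a).image (fun x => (x, x)))
  have c5 := Finset.card_image_le (s := G.neighborFinset a) (f := (fun x => (x, x)))
  simp only [Finset.card_product, SimpleGraph.card_neighborFinset_eq_degree] at c1 c2 c3 c4 c5
  have d1 := Nat.mul_le_mul_right (G.degree b) (key a b hab)
  have d2 := Nat.mul_le_mul_left (G.degree a) (key b a hab.symm)
  rw [← hA] at d1
  rw [← hB] at d2
  omega

open Classical in
theorem good_upper {V : Type*} [Fintype V] {G : SimpleGraph V} (h : C6Free G) (q : V × V) :
    (Finset.univ.filter (fun p => GoodP G p q)).card ≤ 6 := by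
  obtain ⟨x, y⟩ := q
  set s := Finset.univ.filter (fun p => GoodP G p (x, y)) with hs
  have ms : ∀ a b, (a, b) ∈ s ↔ GoodP G (a, b) (x, y) := by simp [hs]
  have inter : ∀ a b a' b', (a, b) ∈ s → (a', b') ∈ s → a = a' ∨ a = b' ∨ b = a' ∨ b = b' := by
    intro a b a' b' h1 h2
    rw [ms] at h1 h2
    simp only [GoodP] at h1 h2
    obtain ⟨e1, e2, e3, n1, n2, n3, -, -⟩ := h1
    obtain ⟨f1, f2, f3, m1, m2, m3, -, -⟩ := h2
    by_contra hcon
    refine c6_aux h e2 e1 e3 f3.symm f1.symm f2.symm ?_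
    have := e1.ne
    have := e2.ne
    have := e3.ne
    have := f1.ne
    have := f2.ne
    have := f3.ne
    simp only [List.nodup_cons, List.mem_cons, List.not_mem_nil, or_false, not_or]
    grind
  have star : ∀ c, (∀ a b, (a, b) ∈ s → a = c ∨ b = c) → s.card ≤ 6 := by
    intro c hc
    have o1 : (s.filter (fun p => p.1 = c)).card ≤ 3 := by
      by_cases hne : (s.filter (fun p => p.1 = c)).Nonempty
      · obtain ⟨⟨a, b⟩, hab⟩ := hne
        rw [Finset.mem_filter, ms] at hab
        obtain ⟨hab, rfl⟩ := hab
        refine le_trans ?_ hab.2.2.2.2.2.2.2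
        refine Finset.card_le_card_of_injOn Prod.snd ?_ ?_
        · rintro ⟨a', b'⟩ hp
          simp only [Finset.coe_filter, Set.mem_ofPred_eq, ms] at hp
          obtain ⟨hp, rfl⟩ := hp
          exact mem_cod.2 ⟨hp.1, hp.2.2.1⟩
        · rintro ⟨a', b'⟩ hp ⟨a'', b''⟩ hp' hh
          simp only [Finset.coe_filter, Set.mem_ofPred_eq] at hp hp' hh
          grind
      · rw [Finset.not_nonempty_iff_eq_empty] at hne
        simp [hne]
    have o2 : (s.filter (fun p => p.2 = c)).card ≤ 3 := by
      by_cases hne : (s.filter (fun p => p.2 = c)).Nonempty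
      · obtain ⟨⟨a, b⟩, hab⟩ := hne
        rw [Finset.mem_filter, ms] at hab
        obtain ⟨hab, rfl⟩ := hab
        refine le_trans ?_ hab.2.2.2.2.2.2.1
        refine Finset.card_le_card_of_injOn Prod.fst ?_ ?_
        · rintro ⟨a', b'⟩ hp
          simp only [Finset.coe_filter, Set.mem_ofPred_eq, ms] at hp
          obtain ⟨hp, rfl⟩ := hp
          exact mem_cod.2 ⟨hp.2.1, hp.1⟩
        · rintro ⟨a', b'⟩ hp ⟨a'', b''⟩ hp' hh
          simp only [Finset.coe_filter, Set.mem_ofPred_eq] at hp hp' hh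
          grind
      · rw [Finset.not_nonempty_iff_eq_empty] at hne
        simp [hne]
    have hsub : s ⊆ s.filter (fun p => p.1 = c) ∪ s.filter (fun p => p.2 = c) := by
      rintro ⟨a, b⟩ hab
      have := hc a b hab
      simp only [Finset.mem_union, Finset.mem_filter]
      tauto
    have := Finset.card_le_card hsub
    have := Finset.card_union_le (s.filter (fun p => p.1 = c)) (s.filter (fun p => p.2 = c))
    omega
  have irr : ∀ a b, (a, b) ∈ s → a ≠ b := by
    intro a b hab
    rw [ms] at hab
    exact hab.1.ne
  by_cases hne : s.Nonempty
  swap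
  · rw [Finset.not_nonempty_iff_eq_empty] at hne
    simp [hne]
  obtain ⟨⟨a, b⟩, hab⟩ := hne
  by_cases ha : ∀ a' b', (a', b') ∈ s → a' = a ∨ b' = a
  · exact star a ha
  by_cases hb : ∀ a' b', (a', b') ∈ s → a' = b ∨ b' = b
  · exact star b hb
  push Not at ha hb
  obtain ⟨a1, b1, h1, n1, n1'⟩ := ha
  obtain ⟨a2, b2, h2, n2, n2'⟩ := hb
  have tri : ∃ c, (a1 = b ∧ b1 = c ∨ a1 = c ∧ b1 = b) ∧ (a2 = a ∧ b2 = c ∨ a2 = c ∧ b2 = a) := by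
    have := inter _ _ _ _ hab h1
    have := inter _ _ _ _ hab h2
    have := inter _ _ _ _ h1 h2
    have := irr _ _ h1
    have := irr _ _ h2
    have := irr _ _ hab
    by_cases a1 = b
    · exact ⟨b1, by grind⟩
    · exact ⟨a1, by grind⟩
  obtain ⟨c, t1, t2⟩ := tri
  have hsub : s ⊆ {(a, b), (b, a), (a, c), (c, a), (b, c), (c, b)} := by
    rintro ⟨u, v⟩ huv
    have := inter _ _ _ _ hab huv
    have := inter _ _ _ _ h1 huv
    have := inter _ _ _ _ h2 huv
    have := irr _ _ huv
    have := irr _ _ hab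
    simp only [Finset.mem_insert, Finset.mem_singleton, Prod.mk.injEq]
    grind
  exact (Finset.card_le_card hsub).trans Finset.card_le_six

theorem real_aux {t p q g : ℝ} (ht : 54 < t) (hp : 0 < p) (hq : 0 < q) (hg : 0 ≤ g)
    (h : p * q ≤ g + 3 * p + 3 * q) : t ^ 2 * (3 - 54 / t) ≤ g + t ^ 2 * (t / p + t / q) := by
  have ht0 : 0 < t := by linarith
  have hpp : 0 < t / p := by positivity
  have hqq : 0 < t / q := by positivity
  have h54 : 0 < 54 / t := by positivity
  by_cases h1 : p ≤ t / 3
  · have : 3 ≤ t / p := by rw [le_div_iff₀ hp]; linarith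
    nlinarith [sq_nonneg t]
  by_cases h2 : q ≤ t / 3
  · have : 3 ≤ t / q := by rw [le_div_iff₀ hq]; linarith
    nlinarith [sq_nonneg t]
  push Not at h1 h2
  set u := p / t with hu
  set v := q / t with hv
  have hu3 : 1 / 3 < u := by rw [hu, lt_div_iff₀ ht0]; linarith
  have hv3 : 1 / 3 < v := by rw [hv, lt_div_iff₀ ht0]; linarith
  have hpu : p = t * u := by rw [hu]; field_simp
  have hqv : q = t * v := by rw [hv]; field_simp
  have e1 : t / p = 1 / u := by rw [hpu]; field_simp
  have e2 : t / q = 1 / v := by rw [hqv]; field_simp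
  set ε := 18 / t with hε
  have hε0 : 0 < ε := by positivity
  have hε1 : ε < 1 := by rw [hε, div_lt_one ht0]; linarith
  have e3 : 54 / t = 3 * ε := by rw [hε]; ring
  have e4 : ε * t = 18 := by rw [hε]; field_simp
  have amgm : 3 ≤ u * v + 1 / u + 1 / v := by
    have hu0 : 0 < u := by linarith
    have hv0 : 0 < v := by linarith
    have : 0 ≤ u ^ 2 * v ^ 2 + v + u - 3 * (u * v) := by
      nlinarith [sq_nonneg (u * v - 1), sq_nonneg (u - v), sq_nonneg (u + v - 2),
        mul_pos hu0 hv0, sq_nonneg (u - 1), sq_nonneg (v - 1)]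
    have e : u * v + 1 / u + 1 / v - 3 = (u ^ 2 * v ^ 2 + v + u - 3 * (u * v)) / (u * v) := by
      field_simp
    have : 0 ≤ u * v + 1 / u + 1 / v - 3 := by rw [e]; positivity
    linarith
  have hg2 : t ^ 2 * (u * v * (1 - ε)) ≤ g := by
    have k1 : 3 * p + 3 * q ≤ t ^ 2 * (u * v * ε) := by
      have : t ^ 2 * (u * v * ε) = t * (u * v) * (ε * t) := by ring
      rw [this, e4, hpu, hqv]
      have : u + v ≤ 6 * (u * v) := by nlinarith
      nlinarith
    have : p * q = t ^ 2 * (u * v) := by rw [hpu, hqv]; ring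
    nlinarith
  rw [e1, e2, e3]
  have hu' : 0 < 1 / u := by rw [← e1]; exact hpp
  have hv' : 0 < 1 / v := by rw [← e2]; exact hqq
  have : 3 - 3 * ε ≤ u * v * (1 - ε) + (1 / u + 1 / v) := by nlinarith
  have := mul_le_mul_of_nonneg_left this (sq_nonneg t)
  linarith

open Classical in
theorem main_count {V : Type*} [Fintype V] {G : SimpleGraph V} (h : C6Free G) {t : ℝ}
    (ht : 54 < t) : t ^ 2 * ((3 - 54 / t) * (2 * G.edgeFinset.card) - 2 * (t * Fintype.card V)) ≤
      6 * (Fintype.card V : ℝ) ^ 2 := by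
  have ht0 : 0 < t := by linarith
  have dc : ∑ p : V × V, (Finset.univ.filter (fun q => GoodP G p q)).card
      = ∑ q : V × V, (Finset.univ.filter (fun p => GoodP G p q)).card :=
    Finset.sum_card_bipartiteAbove_eq_sum_card_bipartiteBelow (fun p q => GoodP G p q)
  have ub : ∑ p : V × V, (Finset.univ.filter (fun q => GoodP G p q)).card
      ≤ 6 * Fintype.card V ^ 2 := by
    rw [dc]
    refine (Finset.sum_le_card_nsmul _ _ 6 (fun q _ => good_upper h q)).trans ?_
    simp only [Finset.card_univ, Fintype.card_prod, smul_eq_mul]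
    apply le_of_eq; ring
  have ub' : ∑ p : V × V, ((Finset.univ.filter (fun q => GoodP G p q)).card : ℝ)
      ≤ 6 * (Fintype.card V : ℝ) ^ 2 := by exact_mod_cast ub
  have row : ∀ (f : V → ℝ) (a : V), ∑ b, (if G.Adj a b then f a else 0) = G.degree a * f a := by
    intro f a
    rw [← Finset.sum_filter, Finset.sum_const, nsmul_eq_mul, ← G.card_neighborFinset_eq_degree,
      G.neighborFinset_eq_filter]
  have s1 : ∑ p : V × V, (if G.Adj p.1 p.2 then (1 : ℝ) else 0) = 2 * G.edgeFinset.card := by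
    rw [Fintype.sum_prod_type]
    simp only [row (fun _ => 1), mul_one]
    exact_mod_cast G.sum_degrees_eq_twice_card_edges
  have s2 : ∑ p : V × V, (if G.Adj p.1 p.2 then t / G.degree p.1 else 0)
      ≤ t * Fintype.card V := by
    rw [Fintype.sum_prod_type]
    simp only [row (fun a => t / G.degree a)]
    refine (Finset.sum_le_card_nsmul _ _ t (fun a _ => ?_)).trans ?_
    · by_cases h0 : (G.degree a : ℝ) = 0
      · rw [h0, zero_mul]; exact ht0.le
      · rw [mul_div_cancel₀ _ h0]
    · rw [Finset.card_univ, nsmul_eq_mul, mul_comm]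
  have s3 : ∑ p : V × V, (if G.Adj p.1 p.2 then t / G.degree p.2 else 0)
      ≤ t * Fintype.card V := by
    refine le_trans (le_of_eq ?_) s2
    rw [Fintype.sum_prod_type, Fintype.sum_prod_type, Finset.sum_comm]
    simp only [G.adj_comm]
  have pt : ∀ p : V × V, t ^ 2 * ((3 - 54 / t) * (if G.Adj p.1 p.2 then (1 : ℝ) else 0)) ≤
      ((Finset.univ.filter (fun q => GoodP G p q)).card : ℝ) +
      t ^ 2 * ((if G.Adj p.1 p.2 then t / G.degree p.1 else 0) +
        (if G.Adj p.1 p.2 then t / G.degree p.2 else 0)) := by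
    rintro ⟨a, b⟩
    by_cases hab : G.Adj a b
    · simp only [hab, if_true, mul_one]
      have hp : 0 < G.degree a := (G.degree_pos_iff_exists_adj a).2 ⟨b, hab⟩
      have hq : 0 < G.degree b := (G.degree_pos_iff_exists_adj b).2 ⟨a, hab.symm⟩
      refine real_aux ht (by exact_mod_cast hp) (by exact_mod_cast hq) (by positivity) ?_
      exact_mod_cast good_lower h hab
    · simp [hab]
  have tot := Finset.sum_le_sum (fun p (_ : p ∈ (Finset.univ : Finset (V × V))) => pt p)
  rw [Finset.sum_add_distrib, ← Finset.mul_sum, ← Finset.mul_sum, ← Finset.mul_sum,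
    Finset.sum_add_distrib, s1] at tot
  have := mul_le_mul_of_nonneg_left (add_le_add s2 s3) (sq_nonneg t)
  linarith

/-- For all sufficiently large `n`, every `C₆`-free simple graph on `n` vertices has
fewer than `n^{4/3}` edges. -/
theorem ex_C6_lt : ∃ N : ℕ, ∀ n : ℕ, N ≤ n → ∀ G : SimpleGraph (Fin n), C6Free G →
    (G.edgeSet.ncard : ℝ) < (n : ℝ) ^ ((4 : ℝ) / 3) := by
  classical
  refine ⟨1000 ^ 3, fun n hn G hG => ?_⟩
  by_contra hcon
  push Not at hcon
  have hn' : (1000 : ℝ) ^ 3 ≤ n := by exact_mod_cast hn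
  set c : ℝ := (n : ℝ) ^ ((1 : ℝ) / 3) with hc
  have hc3 : c ^ 3 = n := by
    rw [hc, ← Real.rpow_natCast, ← Real.rpow_mul (by positivity)]
    norm_num
  have hc4 : (n : ℝ) ^ ((4 : ℝ) / 3) = c ^ 4 := by
    rw [hc, ← Real.rpow_natCast, ← Real.rpow_mul (by positivity)]
    norm_num
  have hc0 : 0 ≤ c := by positivity
  have hc1 : 1000 ≤ c := by
    rw [← hc3] at hn'
    exact le_of_pow_le_pow_left₀ (by norm_num) hc0 hn'
  have key := main_count hG (t := 2 * c) (by linarith)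
  rw [Fintype.card_fin, ← hc3] at key
  rw [hc4, ← SimpleGraph.coe_edgeFinset, Set.ncard_coe_finset] at hcon
  have e1 : 54 / (2 * c) ≤ 1 / 30 := by
    rw [div_le_div_iff₀ (by linarith) (by norm_num)]; linarith
  set E : ℝ := (G.edgeFinset.card : ℝ)
  have e2 : (3 - 1 / 30) * (2 * c ^ 4) ≤ (3 - 54 / (2 * c)) * (2 * E) := by
    apply mul_le_mul (by linarith) (by linarith) (by positivity) (by linarith)
  have e3 : (2 * c) ^ 2 * ((3 - 1 / 30) * (2 * c ^ 4) - 2 * (2 * c * c ^ 3)) ≤ 6 * (c ^ 3) ^ 2 :=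
    le_trans (mul_le_mul_of_nonneg_left (by linarith) (by positivity)) key
  have : 0 < c ^ 6 := by positivity
  nlinarith
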